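/- Let P and Q be independent, positive, non-degenerate real random variables with E(P) < ∞, E(Q) < ∞, E(P⁻²) < ∞ and E(Q⁻²) < ∞. Then (E[ PQ/(P² + Q²)^{1/2} ])² > 1/(E(P⁻²) + E(Q⁻²)). -/

import Mathlib

open MeasureTheory ProbabilityTheory

noncomputable section

/-!
Put `Z = PQ / √(P² + Q²)`, so that `Z⁻² = P⁻² + Q⁻²`, and let `m = E[Z]`. Since
`E[(Z - m)² / Z] = m (m E[Z⁻¹] - 1)`, a non-degenerate `Z` satisfies `1 < E[Z] E[Z⁻¹]`; together
with `E[Z⁻¹]² ≤ E[Z⁻²]` this gives `1 < E[Z]² E[Z⁻²]`. If `Z` were constant, then `P` would be a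
function of `Q`, so `P` would be independent of itself and therefore constant.
-/

section AlmostSurelyConstant

variable {Ω β γ : Type*} [MeasurableSpace Ω] [MeasurableSpace β] [MeasurableSpace γ]
  {μ : Measure Ω}

lemma exists_ae_eq_const_of_indepFun_self [Nonempty β] [MeasurableSpace.CountablySeparated β]
    {X : Ω → β} (hX : IndepFun X X μ) : ∃ c, ∀ᵐ ω ∂μ, X ω = c := by
  refine Filter.exists_eventuallyEq_const_of_forall_separating MeasurableSet fun U hU ↦ ?_
  have hmul : μ (X ⁻¹' U) * μ (X ⁻¹' Uᶜ) = 0 := by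
    rw [← hX.measure_inter_preimage_eq_mul U Uᶜ hU hU.compl, ← Set.preimage_inter,
      Set.inter_compl_self, Set.preimage_empty, measure_empty]
  rcases mul_eq_zero.1 hmul with hnull | hnull
  · exact Or.inr (measure_eq_zero_iff_ae_notMem.1 hnull)
  · exact Or.inl <| (measure_eq_zero_iff_ae_notMem.1 hnull).mono fun _ ↦ not_not.1

lemma exists_ae_eq_const_of_indepFun_of_ae_eq_comp [Nonempty β]
    [MeasurableSpace.CountablySeparated β] {X : Ω → β} {Y : Ω → γ} {φ : γ → β}
    (hXY : IndepFun X Y μ) (hφ : Measurable φ) (hX : ∀ᵐ ω ∂μ, X ω = φ (Y ω)) :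
    ∃ c, ∀ᵐ ω ∂μ, X ω = c :=
  exists_ae_eq_const_of_indepFun_self <|
    (hXY.comp measurable_id hφ).congr .rfl (hX.mono fun _ ↦ Eq.symm)

end AlmostSurelyConstant

section InverseMoments

variable {Ω : Type*} [MeasurableSpace Ω] {μ : Measure Ω} {X : Ω → ℝ}

lemma integral_pos_of_nonneg_ae_of_not_ae_eq_zero (hnonneg : 0 ≤ᵐ[μ] X) (hX : Integrable X μ)
    (hne : ¬ X =ᵐ[μ] 0) : 0 < ∫ ω, X ω ∂μ :=
  (integral_nonneg_of_ae hnonneg).lt_of_ne' <|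
    mt (integral_eq_zero_iff_of_nonneg_ae hnonneg hX).1 hne

variable [IsProbabilityMeasure μ]

lemma one_lt_integral_mul_integral_inv (hpos : ∀ᵐ ω ∂μ, 0 < X ω)
    (hconst : ¬ ∃ c, ∀ᵐ ω ∂μ, X ω = c) (hX : Integrable X μ)
    (hXinv : Integrable (fun ω ↦ (X ω)⁻¹) μ) :
    1 < (∫ ω, X ω ∂μ) * ∫ ω, (X ω)⁻¹ ∂μ := by
  set m := ∫ ω, X ω ∂μ with hm_def
  have hm : 0 < m := integral_pos_of_nonneg_ae_of_not_ae_eq_zero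
    (hpos.mono fun _ ↦ le_of_lt) hX fun h ↦ hconst ⟨0, h⟩
  have hexpand : (fun ω ↦ X ω - 2 * m + m ^ 2 * (X ω)⁻¹) =ᵐ[μ]
      fun ω ↦ (X ω - m) ^ 2 * (X ω)⁻¹ := by
    filter_upwards [hpos] with ω hω
    field_simp
    ring
  have hlinear : Integrable (fun ω ↦ X ω - 2 * m) μ := hX.sub (integrable_const _)
  have hexpand_int : Integrable (fun ω ↦ X ω - 2 * m + m ^ 2 * (X ω)⁻¹) μ :=
    hlinear.add (hXinv.const_mul _)
  have hdeviation : 0 < ∫ ω, (X ω - m) ^ 2 * (X ω)⁻¹ ∂μ := by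
    refine integral_pos_of_nonneg_ae_of_not_ae_eq_zero ?_ (hexpand_int.congr hexpand) fun hzero ↦ ?_
    · filter_upwards [hpos] with ω hω
      exact mul_nonneg (sq_nonneg _) (inv_nonneg.2 hω.le)
    · refine hconst ⟨m, ?_⟩
      filter_upwards [hzero, hpos] with ω hω hωpos
      have hsq : (X ω - m) ^ 2 = 0 :=
        (mul_eq_zero.1 hω).resolve_right (inv_ne_zero hωpos.ne')
      exact sub_eq_zero.1 (pow_eq_zero_iff two_ne_zero |>.1 hsq)
  have hvalue : ∫ ω, (X ω - m) ^ 2 * (X ω)⁻¹ ∂μ = m * (m * ∫ ω, (X ω)⁻¹ ∂μ - 1) := by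
    rw [← integral_congr_ae hexpand, integral_add hlinear (hXinv.const_mul _),
      integral_sub hX (integrable_const _), integral_const_mul (m ^ 2), integral_const,
      probReal_univ, one_smul, ← hm_def]
    ring
  exact sub_pos.1 (pos_of_mul_pos_right (hvalue ▸ hdeviation) hm.le)

lemma sq_integral_le_integral_sq (hX : MemLp X 2 μ) :
    (∫ ω, X ω ∂μ) ^ 2 ≤ ∫ ω, X ω ^ 2 ∂μ :=
  sub_nonneg.1 <| (variance_nonneg X μ).trans_eq (variance_eq_sub hX)

lemma one_div_integral_inv_sq_lt_sq_integral (hpos : ∀ᵐ ω ∂μ, 0 < X ω)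
    (hconst : ¬ ∃ c, ∀ᵐ ω ∂μ, X ω = c) (hX : Integrable X μ)
    (hXinv : Integrable (fun ω ↦ (X ω)⁻¹ ^ 2) μ) :
    1 / ∫ ω, (X ω)⁻¹ ^ 2 ∂μ < (∫ ω, X ω ∂μ) ^ 2 := by
  have hL2 : MemLp (fun ω ↦ (X ω)⁻¹) 2 μ :=
    (memLp_two_iff_integrable_sq hX.aemeasurable.inv.aestronglyMeasurable).2 hXinv
  have hprod : 1 < (∫ ω, X ω ∂μ) * ∫ ω, (X ω)⁻¹ ∂μ :=
    one_lt_integral_mul_integral_inv hpos hconst hX (hL2.integrable one_le_two)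
  have hlt : 1 < (∫ ω, X ω ∂μ) ^ 2 * ∫ ω, (X ω)⁻¹ ^ 2 ∂μ :=
    calc 1 < ((∫ ω, X ω ∂μ) * ∫ ω, (X ω)⁻¹ ∂μ) ^ 2 := one_lt_pow₀ hprod two_ne_zero
      _ = (∫ ω, X ω ∂μ) ^ 2 * (∫ ω, (X ω)⁻¹ ∂μ) ^ 2 := mul_pow _ _ _
      _ ≤ (∫ ω, X ω ∂μ) ^ 2 * ∫ ω, (X ω)⁻¹ ^ 2 ∂μ := by
        gcongr
        exact sq_integral_le_integral_sq hL2
  exact (div_lt_iff₀ (pos_of_mul_pos_right (one_pos.trans hlt) (sq_nonneg _))).2 hlt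

end InverseMoments

section MulDivSqrt

variable {p q : ℝ}

lemma mul_div_sqrt_eq_inv_sqrt (hp : 0 < p) (hq : 0 < q) :
    p * q / √(p ^ 2 + q ^ 2) = (√(p⁻¹ ^ 2 + q⁻¹ ^ 2))⁻¹ := by
  have hsum : p⁻¹ ^ 2 + q⁻¹ ^ 2 = (p ^ 2 + q ^ 2) / (p * q) ^ 2 := by
    field_simp
    ring
  rw [hsum, Real.sqrt_div (by positivity), Real.sqrt_sq (by positivity), inv_div]

lemma inv_mul_div_sqrt_sq (hp : 0 < p) (hq : 0 < q) :
    (p * q / √(p ^ 2 + q ^ 2))⁻¹ ^ 2 = p⁻¹ ^ 2 + q⁻¹ ^ 2 := by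
  rw [mul_div_sqrt_eq_inv_sqrt hp hq, inv_inv, Real.sq_sqrt (by positivity)]

lemma mul_div_sqrt_le_left (hp : 0 < p) (hq : 0 < q) : p * q / √(p ^ 2 + q ^ 2) ≤ p := by
  rw [div_le_iff₀ (by positivity)]
  gcongr
  exact Real.le_sqrt_of_sq_le (le_add_of_nonneg_left (sq_nonneg p))

lemma eq_inv_sqrt_inv_mul_div_sqrt_sq_sub (hp : 0 < p) (hq : 0 < q) :
    p = (√((p * q / √(p ^ 2 + q ^ 2))⁻¹ ^ 2 - q⁻¹ ^ 2))⁻¹ := by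
  rw [inv_mul_div_sqrt_sq hp hq, add_sub_cancel_right, Real.sqrt_sq (by positivity), inv_inv]

variable {Ω : Type*} [MeasurableSpace Ω] {μ : Measure Ω} {P Q : Ω → ℝ}

lemma integrable_mul_div_sqrt (hP : ∀ᵐ ω ∂μ, 0 < P ω) (hQ : ∀ᵐ ω ∂μ, 0 < Q ω)
    (hPint : Integrable P μ)
    (hinv : AEMeasurable (fun ω ↦ (P ω)⁻¹ ^ 2 + (Q ω)⁻¹ ^ 2) μ) :
    Integrable (fun ω ↦ P ω * Q ω / √(P ω ^ 2 + Q ω ^ 2)) μ := by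
  have hmeas : AEMeasurable (fun ω ↦ P ω * Q ω / √(P ω ^ 2 + Q ω ^ 2)) μ := by
    refine hinv.sqrt.inv.congr ?_
    filter_upwards [hP, hQ] with ω hp hq
    exact (mul_div_sqrt_eq_inv_sqrt hp hq).symm
  refine hPint.mono' hmeas.aestronglyMeasurable ?_
  filter_upwards [hP, hQ] with ω hp hq
  rw [Real.norm_of_nonneg (by positivity)]
  exact mul_div_sqrt_le_left hp hq

lemma exists_ae_eq_const_of_mul_div_sqrt_ae_eq_const (hPQ : IndepFun P Q μ)
    (hP : ∀ᵐ ω ∂μ, 0 < P ω) (hQ : ∀ᵐ ω ∂μ, 0 < Q ω)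
    (hconst : ∃ c, ∀ᵐ ω ∂μ, P ω * Q ω / √(P ω ^ 2 + Q ω ^ 2) = c) :
    ∃ c, ∀ᵐ ω ∂μ, P ω = c := by
  obtain ⟨c, hc⟩ := hconst
  refine exists_ae_eq_const_of_indepFun_of_ae_eq_comp
    (φ := fun q ↦ (√(c⁻¹ ^ 2 - q⁻¹ ^ 2))⁻¹) hPQ (by fun_prop) ?_
  filter_upwards [hc, hP, hQ] with ω hω hp hq
  rw [← hω]
  exact eq_inv_sqrt_inv_mul_div_sqrt_sq_sub hp hq

end MulDivSqrt

theorem stmt_18_general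
    {Ω : Type*} [MeasurableSpace Ω] (μ : Measure Ω) [IsProbabilityMeasure μ] (P Q : Ω → ℝ)
    (hPQ : IndepFun P Q μ) (hP : ∀ᵐ ω ∂μ, 0 < P ω) (hQ : ∀ᵐ ω ∂μ, 0 < Q ω)
    (hPconst : ¬ ∃ c, ∀ᵐ ω ∂μ, P ω = c) (hPint : Integrable P μ)
    (hPinv : Integrable (fun ω ↦ (P ω)⁻¹ ^ 2) μ) (hQinv : Integrable (fun ω ↦ (Q ω)⁻¹ ^ 2) μ) :
    1 / (∫ ω, (P ω)⁻¹ ^ 2 ∂μ + ∫ ω, (Q ω)⁻¹ ^ 2 ∂μ)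
      < (∫ ω, P ω * Q ω / √(P ω ^ 2 + Q ω ^ 2) ∂μ) ^ 2 := by
  have hZpos : ∀ᵐ ω ∂μ, 0 < P ω * Q ω / √(P ω ^ 2 + Q ω ^ 2) := by
    filter_upwards [hP, hQ] with ω hp hq
    positivity
  have hZinv : (fun ω ↦ (P ω * Q ω / √(P ω ^ 2 + Q ω ^ 2))⁻¹ ^ 2) =ᵐ[μ]
      fun ω ↦ (P ω)⁻¹ ^ 2 + (Q ω)⁻¹ ^ 2 := by
    filter_upwards [hP, hQ] with ω hp hq
    exact inv_mul_div_sqrt_sq hp hq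
  rw [← integral_add hPinv hQinv, ← integral_congr_ae hZinv]
  exact one_div_integral_inv_sq_lt_sq_integral hZpos
    (mt (exists_ae_eq_const_of_mul_div_sqrt_ae_eq_const hPQ hP hQ) hPconst)
    (integrable_mul_div_sqrt hP hQ hPint (hPinv.add hQinv).aemeasurable)
    ((hPinv.add hQinv).congr hZinv.symm)

/-- if `P` and `Q` are independent, positive, non-degenerate real random
variables with `E(P), E(Q), E(P⁻²), E(Q⁻²) < ∞`, then
`(E[PQ/(P²+Q²)^{1/2}])² > 1/(E(P⁻²) + E(Q⁻²))`. -/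
theorem stmt_18
    {Ω : Type*} [MeasurableSpace Ω] (Pr : Measure Ω) [IsProbabilityMeasure Pr]
    (Pv Qv : Ω → ℝ)
    (hPmeas : Measurable Pv) (hQmeas : Measurable Qv)
    (hindep : IndepFun Pv Qv Pr)
    (hPpos : ∀ᵐ ω ∂Pr, 0 < Pv ω) (hQpos : ∀ᵐ ω ∂Pr, 0 < Qv ω)
    (hPnondeg : ¬ ∃ c : ℝ, ∀ᵐ ω ∂Pr, Pv ω = c)
    (hQnondeg : ¬ ∃ c : ℝ, ∀ᵐ ω ∂Pr, Qv ω = c)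
    (hPint : Integrable Pv Pr) (hQint : Integrable Qv Pr)
    (hPinv : Integrable (fun ω => (Pv ω) ⁻¹ ^ 2) Pr)
    (hQinv : Integrable (fun ω => (Qv ω) ⁻¹ ^ 2) Pr) :
    (∫ ω, Pv ω * Qv ω / Real.sqrt (Pv ω ^ 2 + Qv ω ^ 2) ∂Pr) ^ 2
      > 1 / (∫ ω, (Pv ω) ⁻¹ ^ 2 ∂Pr + ∫ ω, (Qv ω) ⁻¹ ^ 2 ∂Pr) :=
  stmt_18_general Pr Pv Qv hindep hPpos hQpos hPnondeg hPint hPinv hQinv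

end
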